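/- Let G be a group generated by a finite set S and let 𝓗 = {H_1,…,H_l} be a finite collection of stable subgroups of G. Then 𝓗 has finite height: there exists n ∈ ℕ such that the intersection of any n+1 essentially distinct conjugates of subgroups from 𝓗 is finite. -/

import Mathlib

open Pointwise

section BasicDefs

variable {G : Type*} [Group G]

/-- The word length of `g` with respect to the generating set `S`
(words use letters from `S ∪ S⁻¹`). -/
noncomputable def wordLength (S : Set G) (g : G) : ℕ :=
  sInf {n : ℕ | ∃ l : List G, l.length = n ∧ (∀ x ∈ l, x ∈ S ∨ x⁻¹ ∈ S) ∧ l.prod = g}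

/-- The word metric on `G` with respect to the generating set `S`. -/
noncomputable def wordDist (S : Set G) (g h : G) : ℝ :=
  (wordLength S (g⁻¹ * h) : ℝ)

/-- The closed `r`-neighborhood of a subset `A` with respect to the word metric `d_S`. -/
def nbhd (S : Set G) (r : ℝ) (A : Set G) : Set G :=
  {g : G | ∃ a ∈ A, wordDist S g a ≤ r}

/-- The distance between two subsets: the infimum of distances between their elements. -/
noncomputable def setDist (S : Set G) (A B : Set G) : ℝ :=
  sInf {r : ℝ | ∃ a ∈ A, ∃ b ∈ B, r = wordDist S a b}

/-- The conjugate subgroup `H^g = g H g⁻¹`. -/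
def conjSub (g : G) (H : Subgroup G) : Subgroup G :=
  H.map (MulAut.conj g).toMonoidHom

end BasicDefs

/-- `γ` restricted to `{0, …, n}` is a `(K, ε)`-quasigeodesic for the distance function `d`. -/
def IsQuasigeodesic {α : Type*} (d : α → α → ℝ) (K ε : ℝ) (n : ℕ) (γ : ℕ → α) : Prop :=
  ∀ i j : ℕ, i ≤ n → j ≤ n →
    (1 / K) * |(i : ℝ) - (j : ℝ)| - ε ≤ d (γ i) (γ j) ∧
      d (γ i) (γ j) ≤ K * |(i : ℝ) - (j : ℝ)| + ε

/-- `γ` restricted to `{0, …, n}` is a geodesic for the distance function `d`. -/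
def IsGeodesic {α : Type*} (d : α → α → ℝ) (n : ℕ) (γ : ℕ → α) : Prop :=
  ∀ i j : ℕ, i ≤ n → j ≤ n → d (γ i) (γ j) = |(i : ℝ) - (j : ℝ)|

/-- The path `γ` (on `{0, …, n}`) is `f`-stable: every `(K, ε)`-quasigeodesic with endpoints
on `γ` stays in the `f K ε`-neighborhood of `γ`. -/
def IsStablePath {α : Type*} (d : α → α → ℝ) (f : ℝ → ℝ → ℝ) (n : ℕ) (γ : ℕ → α) : Prop :=
  ∀ K ε : ℝ, 1 ≤ K → 0 ≤ ε → ∀ (m : ℕ) (η : ℕ → α),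
    IsQuasigeodesic d K ε m η →
    (∃ i ≤ n, η 0 = γ i) → (∃ i ≤ n, η m = γ i) →
    ∀ j ≤ m, ∃ i ≤ n, d (η j) (γ i) ≤ f K ε

/-- The Gromov product `⟨x, y⟩_w` with respect to a distance function `d`. -/
noncomputable def gromovProd {α : Type*} (d : α → α → ℝ) (w x y : α) : ℝ :=
  (d w x + d w y - d x y) / 2

/-- Gromov hyperbolicity of a distance function, via the four-point condition. -/
def IsHyperbolicDist {α : Type*} (d : α → α → ℝ) : Prop :=
  ∃ δ : ℝ, 0 ≤ δ ∧ ∀ w x y z : α,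
    min (gromovProd d w x y) (gromovProd d w y z) - δ ≤ gromovProd d w x z

section GroupDefs

variable {G : Type*} [Group G]

/-- `H` is a stable subgroup of `(G, d_S)` with stability function `f`: `H` has a finite
generating set `T` such that the inclusion `(H, d_T) → (G, d_S)` is a quasi-isometric
embedding sending every `d_T`-geodesic to an `f`-stable quasigeodesic of `(G, d_S)`. -/
def IsStableSubgroupWith (S : Set G) (H : Subgroup G) (f : ℝ → ℝ → ℝ) : Prop :=
  ∃ T : Set H, T.Finite ∧ Subgroup.closure T = ⊤ ∧
    (∃ μ c : ℝ, 1 ≤ μ ∧ 0 ≤ c ∧ ∀ h₁ h₂ : H,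
      (1 / μ) * wordDist T h₁ h₂ - c ≤ wordDist S (h₁ : G) (h₂ : G) ∧
        wordDist S (h₁ : G) (h₂ : G) ≤ μ * wordDist T h₁ h₂ + c) ∧
    ∀ (n : ℕ) (γ : ℕ → H), IsGeodesic (wordDist T) n γ →
      (∃ K ε : ℝ, 1 ≤ K ∧ 0 ≤ ε ∧
        IsQuasigeodesic (wordDist S) K ε n (fun i => (γ i : G))) ∧
      IsStablePath (wordDist S) f n (fun i => (γ i : G))

/-- `H` is a stable subgroup of `(G, d_S)`. -/
def IsStableSubgroup (S : Set G) (H : Subgroup G) : Prop :=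
  ∃ f : ℝ → ℝ → ℝ, IsStableSubgroupWith S H f

/-- The family `Q` of subgroups is hyperbolically embedded in `(G, X)`:
(Q1) geometric separation, (Q2) finite generation, (Q3) uniform quasi-isometric embedding. -/
def IsHypEmbFamily {G : Type*} [Group G] {ι : Type*} (X : Set G) (Q : ι → Subgroup G) : Prop :=
  (∀ ε : ℝ, 0 < ε → ∃ R : ℝ, ∀ (g : G) (i j : ι),
      (∃ a ∈ (Q i : Set G) ∩ nbhd X ε (g • (Q j : Set G)),
        ∃ b ∈ (Q i : Set G) ∩ nbhd X ε (g • (Q j : Set G)), R ≤ wordDist X a b) →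
      i = j ∧ g ∈ Q i) ∧
  ∃ Y : ι → Set G, (∀ i, (Y i).Finite ∧ Y i ⊆ (Q i : Set G) ∧ Subgroup.closure (Y i) = Q i) ∧
    ∃ μ c : ℝ, 1 ≤ μ ∧ 0 ≤ c ∧ ∀ i : ι, ∀ h ∈ Q i,
      (wordLength (Y i) h : ℝ) ≤ μ * (wordLength X h : ℝ) + c

/-- The subset `H` of `G` satisfies the WPD condition in `(G, X)`. -/
def WPDSet (X : Set G) (H : Set G) : Prop :=
  ∀ ε : ℝ, 0 < ε → ∃ N : ℝ, 0 < N ∧ ∀ h₁ h₂ : G, h₁ ∈ H → h₂ ∈ H →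
    N < wordDist X h₁ h₂ →
    {g : G | wordDist X h₁ (g * h₁) < ε ∧ wordDist X h₂ (g * h₂) < ε}.Finite

/-- A quasimorphism on `G`. -/
def IsQuasimorphism (q : G → ℝ) : Prop :=
  ∃ D : ℝ, 0 ≤ D ∧ ∀ x y : G, |q (x * y) - q x - q y| ≤ D

/-- A homogeneous quasimorphism on `G`. -/
def IsHomogeneousQM (q : G → ℝ) : Prop :=
  IsQuasimorphism q ∧ ∀ (x : G) (n : ℕ), q (x ^ n) = (n : ℝ) * q x

/-- `H` is a quasiconvex subgroup of `(G, d_S)`: every geodesic with endpoints in `H`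
lies in a uniformly bounded neighborhood of `H`. -/
def IsQuasiconvex (S : Set G) (H : Subgroup G) : Prop :=
  ∃ C : ℝ, 0 ≤ C ∧ ∀ (n : ℕ) (γ : ℕ → G), IsGeodesic (wordDist S) n γ →
    γ 0 ∈ H → γ n ∈ H → ∀ i ≤ n, ∃ h ∈ H, wordDist S (γ i) h ≤ C

end GroupDefs

/-!
Stability is used only through strong quasiconvexity: a quasigeodesic with endpoints in a stable
subgroup stays uniformly close to it. Let `a` be a long element of the intersection of the
conjugates `H_i^{g_i}`. Each coset `g_i H_i` contains both `g_i` and `a g_i`, which lie within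
`D = max |g_i|` of the endpoints of a geodesic `α` from `1` to `a`. Attaching to a subsegment of `α`
geodesics from these two points to their nearest points on `α` gives a quasigeodesic whose constants
do not depend on `D`, so every point of `α` far from its ends is within a distance `R`, independent
of `D`, of every coset `g_i H_i`. Distinct cosets of one subgroup are disjoint, so at most `l · |B|`
cosets meet a given ball of radius `R`, where `|B|` is the cardinality of that ball.
-/

/-! ### Paths in metric spaces -/

section Paths

variable {α : Type*} {d : α → α → ℝ} {K K' ε ε' R R' : ℝ} {n p m : ℕ} {β γ : ℕ → α} {A : Set α}

/-- Any two points are joined by a geodesic parametrized by integers, as in the vertex set of a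
connected graph. -/
def IsDiscretelyGeodesic (d : α → α → ℝ) : Prop :=
  ∀ x y : α, ∃ (n : ℕ) (γ : ℕ → α), IsGeodesic d n γ ∧ γ 0 = x ∧ γ n = y

/-- Quasiconvexity of `A` with constant `R`, tested on `(K, ε)`-quasigeodesics instead of
geodesics. -/
def IsQuasiconvexFor (d : α → α → ℝ) (K ε R : ℝ) (A : Set α) : Prop :=
  ∀ (m : ℕ) (η : ℕ → α), IsQuasigeodesic d K ε m η → η 0 ∈ A → η m ∈ A →
    ∀ j ≤ m, ∃ a ∈ A, d (η j) a ≤ R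

/-- Strong quasiconvexity, also known as being a Morse subset: quasiconvexity with respect to
quasigeodesics with arbitrary constants. -/
def IsStronglyQuasiconvex (d : α → α → ℝ) (A : Set α) : Prop :=
  ∀ K ε : ℝ, 1 ≤ K → 0 ≤ ε → ∃ R : ℝ, IsQuasiconvexFor d K ε R A

/-- The concatenation of the path `β` on `{0, …, p}` with the path `γ`, which is meant to start at
`β p`. -/
def concatPath (p : ℕ) (β γ : ℕ → α) (i : ℕ) : α :=
  if i ≤ p then β i else γ (i - p)

theorem concatPath_of_le {i : ℕ} (hi : i ≤ p) : concatPath p β γ i = β i :=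
  if_pos hi

theorem concatPath_add (h : β p = γ 0) (j : ℕ) : concatPath p β γ (p + j) = γ j := by
  obtain rfl | hj := j.eq_zero_or_pos
  · rw [add_zero, concatPath_of_le le_rfl, h]
  · rw [concatPath, if_neg (by lia), Nat.add_sub_cancel_left]

theorem IsGeodesic.subpath (h : IsGeodesic d n γ) {s : ℕ} (hs : s + m ≤ n) :
    IsGeodesic d m (fun i => γ (s + i)) := by
  intro i j hi hj
  simpa only [Nat.cast_add, add_sub_add_left_eq_sub] using h (s + i) (s + j) (by lia) (by lia)

theorem IsGeodesic.isQuasigeodesic (h : IsGeodesic d n γ) : IsQuasigeodesic d 1 0 n γ := by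
  intro i j hi hj
  simp [h i j hi hj]

theorem IsQuasigeodesic.reverse (h : IsQuasigeodesic d K ε n γ) :
    IsQuasigeodesic d K ε n (fun i => γ (n - i)) := by
  intro i j hi hj
  have key := h (n - i) (n - j) (by lia) (by lia)
  rwa [Nat.cast_sub hi, Nat.cast_sub hj, sub_sub_sub_cancel_left, abs_sub_comm] at key

theorem IsQuasigeodesic.mono (h : IsQuasigeodesic d K ε n γ) (hK : 0 < K) (hKK' : K ≤ K')
    (hεε' : ε ≤ ε') : IsQuasigeodesic d K' ε' n γ := by
  intro i j hi hj
  obtain ⟨hlow, hup⟩ := h i j hi hj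
  constructor
  · refine le_trans ?_ hlow
    gcongr
  · refine hup.trans ?_
    gcongr

theorem IsQuasiconvexFor.mono (hA : IsQuasiconvexFor d K ε R A) (hR : R ≤ R') :
    IsQuasiconvexFor d K ε R' A := by
  intro m η hη h0 hm j hj
  obtain ⟨a, ha, hdist⟩ := hA m η hη h0 hm j hj
  exact ⟨a, ha, hdist.trans hR⟩

end Paths

section MetricPaths

variable {X : Type*} [PseudoMetricSpace X] {K ε R D : ℝ} {k n p : ℕ} {β γ : ℕ → X} {x y : X}
  {A : Set X}

theorem isGeodesic_of_dist_succ_le_one (hstep : ∀ i < n, dist (γ i) (γ (i + 1)) ≤ 1)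
    (hn : n ≤ dist (γ 0) (γ n)) : IsGeodesic dist n γ := by
  have hle : ∀ i j : ℕ, i ≤ j → j ≤ n → dist (γ i) (γ j) ≤ j - i := by
    intro i j hij hj
    have hsum := dist_le_Ico_sum_of_dist_le hij (d := fun _ => 1)
      fun {k} _ hk => hstep k (hk.trans_le hj)
    simpa [Nat.cast_sub hij] using hsum
  intro i j hi hj
  wlog hij : i ≤ j generalizing i j
  · rw [abs_sub_comm, dist_comm]
    exact this j i hj hi (le_of_not_ge hij)
  rw [abs_sub_comm, abs_of_nonneg (sub_nonneg.2 (Nat.cast_le.2 hij))]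
  refine le_antisymm (hle i j hij hj) ?_
  have h0i := hle 0 i i.zero_le hi
  rw [Nat.cast_zero, sub_zero] at h0i
  linarith [hle j n hj le_rfl, dist_triangle4 (γ 0) (γ i) (γ j) (γ n)]

theorem IsQuasigeodesic.dist_bounds_of_nearest (hγ : IsQuasigeodesic dist K ε n γ) (hK : 0 < K)
    (hε : 0 ≤ ε) {j : ℕ} (hj : j ≤ n) (hmin : dist x (γ 0) ≤ dist x (γ j)) :
    (1 / (2 * K + 1)) * (dist x (γ 0) + j) - ε ≤ dist x (γ j) ∧
      dist x (γ j) ≤ (2 * K + 1) * (dist x (γ 0) + j) + ε := by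
  obtain ⟨hlow, hup⟩ := hγ 0 j n.zero_le hj
  rw [Nat.cast_zero, zero_sub, abs_neg, Nat.abs_cast] at hlow hup
  constructor
  · have hj_le : (j : ℝ) ≤ K * (2 * dist x (γ j) + ε) := by
      rw [one_div_mul_eq_div] at hlow
      rw [← div_le_iff₀' hK]
      linarith [dist_triangle_left (γ 0) (γ j) x]
    rw [sub_le_iff_le_add, one_div, inv_mul_le_iff₀ (by positivity)]
    linarith [mul_nonneg hK.le hε]
  · have hKx := mul_nonneg hK.le (dist_nonneg (x := x) (y := γ 0))
    have hKj := mul_nonneg hK.le j.cast_nonneg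
    linarith [dist_triangle x (γ 0) (γ j), j.cast_nonneg (α := ℝ)]

theorem IsQuasigeodesic.concatPath_of_nearest (hγ : IsQuasigeodesic dist K ε n γ) (hK : 0 < K)
    (hε : 0 ≤ ε) (hβ : IsGeodesic dist p β) (hβγ : β p = γ 0)
    (hmin : ∀ j ≤ n, dist (β 0) (γ 0) ≤ dist (β 0) (γ j)) :
    IsQuasigeodesic dist (2 * K + 1) ε (p + n) (concatPath p β γ) := by
  have hstart : ∀ i ≤ p, dist (β 0) (β i) = i := fun i hi => by simp [hβ 0 i p.zero_le hi]
  have hend : ∀ i ≤ p, dist (β i) (γ 0) = p - i := fun i hi => by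
    rw [← hβγ, hβ i p hi le_rfl, abs_sub_comm, abs_of_nonneg (sub_nonneg.2 (Nat.cast_le.2 hi))]
  have hmin_i : ∀ i ≤ p, ∀ j ≤ n, dist (β i) (γ 0) ≤ dist (β i) (γ j) := by
    intro i hi j hj
    have hpj := hmin j hj
    rw [← hβγ, hstart p le_rfl] at hpj
    linarith [hstart i hi, hend i hi, dist_triangle (β 0) (β i) (γ j)]
  intro i j hi hj
  wlog hij : i ≤ j generalizing i j
  · rw [abs_sub_comm, dist_comm]
    exact this j i hj hi (le_of_not_ge hij)
  obtain hjp | hpj := le_total j p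
  · rw [concatPath_of_le (hij.trans hjp), concatPath_of_le hjp]
    exact hβ.isQuasigeodesic.mono one_pos (by linarith) hε i j (hij.trans hjp) hjp
  obtain ⟨v, rfl⟩ := Nat.exists_eq_add_of_le hpj
  rw [concatPath_add hβγ]
  obtain hip | hpi := le_total i p
  · rw [concatPath_of_le hip, abs_sub_comm, abs_of_nonneg (sub_nonneg.2 (Nat.cast_le.2 hij)),
      Nat.cast_add, add_sub_right_comm, ← hend i hip]
    exact hγ.dist_bounds_of_nearest hK hε (by lia) (hmin_i i hip v (by lia))
  · obtain ⟨u, rfl⟩ := Nat.exists_eq_add_of_le hpi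
    rw [concatPath_add hβγ, Nat.cast_add, Nat.cast_add, add_sub_add_left_eq_sub]
    exact hγ.mono hK (by linarith) le_rfl u v (by lia) (by lia)

open Metric in
theorem IsQuasigeodesic.exists_extend_to_point (hγ : IsQuasigeodesic dist K ε n γ) (hK : 0 < K)
    (hε : 0 ≤ ε) (hX : IsDiscretelyGeodesic (dist : X → X → ℝ))
    (hmin : ∀ j ≤ n, dist x (γ 0) ≤ dist x (γ j)) :
    ∃ (m : ℕ) (η : ℕ → X), IsQuasigeodesic dist (2 * K + 1) ε m η ∧ η 0 = x ∧ η m = γ n ∧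
      (∀ j ≤ n, ∃ i ≤ m, η i = γ j) ∧
      ∀ i ≤ m, η i ∈ closedBall x (dist x (γ 0)) ∨ ∃ j ≤ n, η i = γ j := by
  obtain ⟨p, β, hβ, rfl, hβγ⟩ := hX x (γ 0)
  refine ⟨p + n, concatPath p β γ, hγ.concatPath_of_nearest hK hε hβ hβγ hmin,
    concatPath_of_le p.zero_le, concatPath_add hβγ n,
    fun j hj => ⟨p + j, by lia, concatPath_add hβγ j⟩, fun i hi => ?_⟩
  obtain hip | hpi := le_total i p
  · left
    rw [concatPath_of_le hip, mem_closedBall', ← hβγ, hβ 0 i p.zero_le hip, hβ 0 p p.zero_le le_rfl]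
    simpa using hip
  · obtain ⟨j, rfl⟩ := Nat.exists_eq_add_of_le hpi
    exact .inr ⟨j, by lia, concatPath_add hβγ j⟩

theorem exists_nearest_index (γ : ℕ → X) (n : ℕ) (x : X) :
    ∃ s ≤ n, ∀ i ≤ n, dist x (γ s) ≤ dist x (γ i) := by
  simpa [Nat.lt_succ_iff] using
    Finset.exists_min_image (Finset.range (n + 1)) (fun i => dist x (γ i)) ⟨0, by simp⟩

theorem IsGeodesic.abs_sub_le_of_dist_le (hγ : IsGeodesic dist n γ) {i s : ℕ} (hi : i ≤ n)
    (hs : s ≤ n) (h : dist x (γ s) ≤ dist x (γ i)) : |(i : ℝ) - s| ≤ 2 * dist x (γ i) := by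
  rw [← hγ i s hi hs]
  linarith [dist_triangle_left (γ i) (γ s) x]

theorem IsGeodesic.le_dist_of_dist_le {z : X} (hγ : IsGeodesic dist n γ) (hx : dist x (γ 0) ≤ D)
    (hy : dist y (γ n) ≤ D) (hn : 4 * D ≤ n) (hz : dist x z ≤ D) : D ≤ dist y z := by
  have h0n : dist (γ 0) (γ n) = n := by simp [hγ 0 n n.zero_le le_rfl]
  linarith [dist_triangle (γ 0) z (γ n), dist_triangle_left (γ 0) z x, dist_triangle_left z (γ n) y]

-- Attaching a shortest geodesic turns the constant `K` into `2 * K + 1`, so doing this at both ends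
-- of a geodesic turns `1` into `7`.
theorem IsGeodesic.exists_isQuasigeodesic_through (hγ : IsGeodesic dist n γ)
    (hX : IsDiscretelyGeodesic (dist : X → X → ℝ)) (hx : dist x (γ 0) ≤ D)
    (hy : dist y (γ n) ≤ D) (hk : 2 * D ≤ k) (hkn : k + 2 * D ≤ n) :
    ∃ (m : ℕ) (η : ℕ → X), IsQuasigeodesic dist 7 0 m η ∧ η 0 = y ∧ η m = x ∧
      ∃ j ≤ m, η j = γ k := by
  obtain ⟨s, hsn, hs⟩ := exists_nearest_index γ n x
  obtain ⟨t, htn, ht⟩ := exists_nearest_index γ n y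
  have hsk : s ≤ k := by
    have := hγ.abs_sub_le_of_dist_le n.zero_le hsn (hs 0 n.zero_le)
    rw [Nat.cast_zero, zero_sub, abs_neg, Nat.abs_cast] at this
    exact_mod_cast (by linarith : (s : ℝ) ≤ k)
  have hkt : k ≤ t := by
    have := le_of_abs_le (hγ.abs_sub_le_of_dist_le le_rfl htn (ht n le_rfl))
    exact_mod_cast (by linarith : (k : ℝ) ≤ t)
  have hsub : IsGeodesic dist (t - s) (fun i => γ (s + i)) := hγ.subpath (by lia)
  obtain ⟨m, η, hη, hη0, hηm, hγη, hηγ⟩ := hsub.isQuasigeodesic.exists_extend_to_point one_pos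
    le_rfl hX fun j hj => hs (s + j) (by lia)
  have hηm : η m = γ t := by rw [hηm, Nat.add_sub_cancel' (hsk.trans hkt)]
  have hnear : ∀ i ≤ m, dist y (γ t) ≤ dist y (η i) := by
    intro i hi
    obtain hball | ⟨j, hj, hij⟩ := hηγ i hi
    · exact ((ht n le_rfl).trans hy).trans <| hγ.le_dist_of_dist_le hx hy (by linarith) <|
        (Metric.mem_closedBall'.1 hball).trans <| (hs 0 n.zero_le).trans hx
    · exact hij ▸ ht (s + j) (by lia)
  obtain ⟨m', η', hη', hη'0, hη'm, hηη', -⟩ := hη.reverse.exists_extend_to_point (x := y)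
    (by norm_num) le_rfl hX fun i _ => by simpa [hηm] using hnear (m - i) (by lia)
  obtain ⟨i, hi, hik⟩ := hγη (k - s) (by lia)
  obtain ⟨j, hj, hji⟩ := hηη' (m - i) (by lia)
  have h7 : 2 * (2 * 1 + 1) + 1 = (7 : ℝ) := by norm_num
  refine ⟨m', η', h7 ▸ hη', hη'0, by simpa [hη0] using hη'm, j, hj, ?_⟩
  rw [hji, Nat.sub_sub_self hi, hik, Nat.add_sub_cancel' hsk]

theorem IsQuasiconvexFor.exists_dist_le (hA : IsQuasiconvexFor dist 7 0 R A)
    (hX : IsDiscretelyGeodesic (dist : X → X → ℝ)) (hγ : IsGeodesic dist n γ) (hxA : x ∈ A)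
    (hyA : y ∈ A) (hx : dist x (γ 0) ≤ D) (hy : dist y (γ n) ≤ D) (hk : 2 * D ≤ k)
    (hkn : k + 2 * D ≤ n) : ∃ a ∈ A, dist (γ k) a ≤ R := by
  obtain ⟨m, η, hη, hη0, hηm, j, hj, hjk⟩ := hγ.exists_isQuasigeodesic_through hX hx hy hk hkn
  exact hjk ▸ hA m η hη (hη0 ▸ hyA) (hηm ▸ hxA) j hj

end MetricPaths

/-! ### The word metric -/

section WordMetric

variable {G : Type*} [Group G] {S : Set G}

theorem exists_list_length_eq_wordLength (hS : Subgroup.closure S = ⊤) (g : G) :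
    ∃ w : List G, w.length = wordLength S g ∧ (∀ x ∈ w, x ∈ S ∨ x⁻¹ ∈ S) ∧ w.prod = g := by
  have hg : g ∈ (Subgroup.closure S).toSubmonoid := hS ▸ Subgroup.mem_top g
  rw [Subgroup.closure_toSubmonoid] at hg
  obtain ⟨w, hw, hprod⟩ := Submonoid.exists_list_of_mem_closure hg
  exact Nat.sInf_mem (s := {n | ∃ w : List G, w.length = n ∧ _}) ⟨w.length, w, rfl, hw, hprod⟩

theorem wordLength_prod_le {w : List G} (hw : ∀ x ∈ w, x ∈ S ∨ x⁻¹ ∈ S) :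
    wordLength S w.prod ≤ w.length :=
  Nat.sInf_le ⟨w, rfl, hw, rfl⟩

theorem wordLength_mul_le (hS : Subgroup.closure S = ⊤) (g h : G) :
    wordLength S (g * h) ≤ wordLength S g + wordLength S h := by
  obtain ⟨v, hvlen, hv, rfl⟩ := exists_list_length_eq_wordLength hS g
  obtain ⟨w, hwlen, hw, rfl⟩ := exists_list_length_eq_wordLength hS h
  rw [← hvlen, ← hwlen, ← List.prod_append, ← List.length_append]
  exact wordLength_prod_le fun x hx => (List.mem_append.1 hx).elim (hv x) (hw x)

theorem wordLength_inv (S : Set G) (g : G) : wordLength S g⁻¹ = wordLength S g := by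
  have hsubset : ∀ g : G,
      {n : ℕ | ∃ w : List G, w.length = n ∧ (∀ x ∈ w, x ∈ S ∨ x⁻¹ ∈ S) ∧ w.prod = g} ⊆
        {n : ℕ | ∃ w : List G, w.length = n ∧ (∀ x ∈ w, x ∈ S ∨ x⁻¹ ∈ S) ∧ w.prod = g⁻¹} := by
    rintro g n ⟨w, hlen, hw, rfl⟩
    refine ⟨(w.map (·⁻¹)).reverse, by simpa using hlen, fun x hx => ?_,
      (List.prod_inv_reverse w).symm⟩
    simpa using (hw x⁻¹ (by simpa using hx)).symm
  exact congrArg sInf (((hsubset g⁻¹).trans_eq (by rw [inv_inv])).antisymm (hsubset g))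

theorem wordDist_one_left (S : Set G) (g : G) : wordDist S 1 g = wordLength S g := by
  rw [wordDist, inv_one, one_mul]

theorem wordDist_mul_left (S : Set G) (a g h : G) :
    wordDist S (a * g) (a * h) = wordDist S g h := by
  simp [wordDist, mul_assoc]

theorem wordDist_self (S : Set G) (g : G) : wordDist S g g = 0 := by
  simpa [wordDist] using wordLength_prod_le (S := S) (w := []) (by simp)

theorem wordDist_comm (S : Set G) (g h : G) : wordDist S g h = wordDist S h g := by
  rw [wordDist, ← wordLength_inv, mul_inv_rev, inv_inv, wordDist]

theorem wordDist_triangle (hS : Subgroup.closure S = ⊤) (g h k : G) :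
    wordDist S g k ≤ wordDist S g h + wordDist S h k := by
  simpa [wordDist, mul_assoc] using
    Nat.cast_le (α := ℝ).2 (wordLength_mul_le hS (g⁻¹ * h) (h⁻¹ * k))

/-- The word metric of a generating set as a `PseudoMetricSpace` structure, through which the
results on paths apply to groups. It is not an instance since it depends on the generating set. -/
noncomputable abbrev wordPseudoMetricSpace (hS : Subgroup.closure S = ⊤) :
    PseudoMetricSpace G where
  dist := wordDist S
  dist_self := wordDist_self S
  dist_comm := wordDist_comm S
  dist_triangle := wordDist_triangle hS

theorem isDiscretelyGeodesic_wordDist (hS : Subgroup.closure S = ⊤) :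
    IsDiscretelyGeodesic (wordDist S) := by
  let _ := wordPseudoMetricSpace hS
  intro x y
  obtain ⟨w, hlen, hw, hprod⟩ := exists_list_length_eq_wordLength hS (x⁻¹ * y)
  have hend : x * (w.take w.length).prod = y := by
    rw [List.take_length, hprod, mul_inv_cancel_left]
  refine ⟨w.length, fun i => x * (w.take i).prod,
    isGeodesic_of_dist_succ_le_one (fun i hi => ?_) ?_, by simp, hend⟩
  · change wordDist S _ _ ≤ 1
    rw [wordDist_mul_left, List.prod_take_succ w i hi, wordDist, inv_mul_cancel_left]
    simpa using wordLength_prod_le (w := [w[i]]) (by simpa using hw w[i] (w.getElem_mem hi))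
  · change (w.length : ℝ) ≤ wordDist S _ _
    rw [hend, hlen]
    simp [wordDist]

theorem finite_setOf_wordLength_le (hSfin : S.Finite) (hS : Subgroup.closure S = ⊤) (r : ℝ) :
    {g : G | (wordLength S g : ℝ) ≤ r}.Finite := by
  have : Finite ↑(S ∪ S⁻¹) := hSfin.union hSfin.inv
  refine ((List.finite_length_le ↑(S ∪ S⁻¹) ⌊r⌋₊).image
    fun w => (w.map Subtype.val).prod).subset fun g hg => ?_
  obtain ⟨w, hlen, hw, rfl⟩ := exists_list_length_eq_wordLength hS g
  lift w to List ↑(S ∪ S⁻¹) using hw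
  rw [List.length_map] at hlen
  exact ⟨w, hlen.trans_le (Nat.le_floor hg), rfl⟩

end WordMetric

/-! ### Height of families of subgroups -/

section Height

variable {G : Type*} [Group G] {ι : Type*} {S : Set G}

/-- The family `H` has height at most `n`: the intersection of more than `n` essentially distinct
conjugates of its members is finite. A family of conjugates is encoded by the indices `σ` of the
members and the conjugating elements `g`. -/
def HeightAtMost (H : ι → Subgroup G) (n : ℕ) : Prop :=
  ∀ (k : ℕ) (σ : Fin k → ι) (g : Fin k → G),
    (∀ i j : Fin k, i ≠ j → g i • (H (σ i) : Set G) ≠ g j • (H (σ j) : Set G)) →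
    n + 1 ≤ k → (⋂ i : Fin k, (conjSub (g i) (H (σ i)) : Set G)).Finite

theorem mem_conjSub_iff {a g : G} {H : Subgroup G} :
    a ∈ conjSub g H ↔ a * g ∈ g • (H : Set G) := by
  simp only [conjSub, Subgroup.mem_map, Set.mem_smul_set, SetLike.mem_coe]
  exact exists_congr fun h => and_congr_right fun _ => by
    simp [mul_inv_eq_iff_eq_mul]

theorem IsQuasiconvexFor.smul {K ε R : ℝ} {A : Set G}
    (hA : IsQuasiconvexFor (wordDist S) K ε R A) (g : G) :
    IsQuasiconvexFor (wordDist S) K ε R (g • A) := by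
  intro m η hη h0 hm j hj
  have hη' : IsQuasigeodesic (wordDist S) K ε m (fun i => g⁻¹ * η i) := by
    simpa only [IsQuasigeodesic, wordDist_mul_left] using hη
  obtain ⟨a, ha, hdist⟩ := hA m _ hη' (Set.mem_smul_set_iff_inv_smul_mem.1 h0)
    (Set.mem_smul_set_iff_inv_smul_mem.1 hm) j hj
  refine ⟨g • a, Set.smul_mem_smul_set ha, ?_⟩
  rwa [smul_eq_mul, ← wordDist_mul_left S g⁻¹, inv_mul_cancel_left]

theorem IsStableSubgroupWith.isQuasiconvexFor {H : Subgroup G} {f : ℝ → ℝ → ℝ} {K ε : ℝ}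
    (hH : IsStableSubgroupWith S H f) (hK : 1 ≤ K) (hε : 0 ≤ ε) :
    IsQuasiconvexFor (wordDist S) K ε (f K ε) (H : Set G) := by
  obtain ⟨T, -, hT, -, hgeo⟩ := hH
  intro m η hη h0 hm j hj
  obtain ⟨n, γ, hγ, hγ0, hγn⟩ := isDiscretelyGeodesic_wordDist hT ⟨η 0, h0⟩ ⟨η m, hm⟩
  obtain ⟨i, -, hi⟩ := (hgeo n γ hγ).2 K ε hK hε m η hη ⟨0, n.zero_le, by simp [hγ0]⟩
    ⟨n, le_rfl, by simp [hγn]⟩ j hj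
  exact ⟨γ i, (γ i).2, hi⟩

theorem IsStableSubgroup.isStronglyQuasiconvex {H : Subgroup G} (hH : IsStableSubgroup S H) :
    IsStronglyQuasiconvex (wordDist S) (H : Set G) := by
  obtain ⟨f, hf⟩ := hH
  exact fun K ε hK hε => ⟨f K ε, hf.isQuasiconvexFor hK hε⟩

theorem card_le_of_forall_smul_inter_nonempty [Finite ι] {κ : Type*} {H : ι → Subgroup G}
    {B : Set G} (hB : B.Finite) {σ : κ → ι} {g : κ → G}
    (hinj : Function.Injective fun i => g i • (H (σ i) : Set G))
    (hmeet : ∀ i, (g i • (H (σ i) : Set G) ∩ B).Nonempty) :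
    Nat.card κ ≤ Nat.card ι * B.ncard := by
  choose b hbH hbB using hmeet
  have hcoset : ∀ i, g i • (H (σ i) : Set G) = b i • (H (σ i) : Set G) := by
    intro i
    obtain ⟨h, hh, hb⟩ := hbH i
    rw [← show g i * h = b i from hb, mul_smul, smul_coe_set hh]
  have hpair : Function.Injective fun i => (σ i, (⟨b i, hbB i⟩ : B)) := by
    intro i j hij
    obtain ⟨hσ, hb⟩ := Prod.mk.inj hij
    refine hinj ?_
    change g i • (H (σ i) : Set G) = g j • (H (σ j) : Set G)
    rw [hcoset i, hcoset j, hσ, Subtype.mk.inj hb]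
  have := hB.to_subtype
  rw [← Nat.card_coe_set_eq, ← Nat.card_prod]
  exact Nat.card_le_card_of_injective _ hpair

theorem exists_forall_coset_near {κ : Type*} (hS : Subgroup.closure S = ⊤) {C : κ → Subgroup G}
    {R : ℝ} (hC : ∀ i, IsQuasiconvexFor (wordDist S) 7 0 R (C i : Set G)) {g : κ → G} {D : ℕ}
    (hD : ∀ i, wordLength S (g i) ≤ D) {a : G} (ha : ∀ i, a ∈ conjSub (g i) (C i))
    (haD : 4 * D ≤ wordLength S a) :
    ∃ p : G, ∀ i, ∃ z ∈ g i • (C i : Set G), wordDist S p z ≤ R := by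
  let _ := wordPseudoMetricSpace hS
  obtain ⟨n, γ, hγ, hγ0, hγn⟩ := isDiscretelyGeodesic_wordDist hS 1 a
  have hn : n = wordLength S a := by
    have := hγ 0 n n.zero_le le_rfl
    rw [hγ0, hγn, wordDist_one_left] at this
    simpa using this.symm
  have hD' : ∀ i, (wordLength S (g i) : ℝ) ≤ D := fun i => Nat.cast_le.2 (hD i)
  refine ⟨γ (2 * D), fun i => ((hC i).smul (g i)).exists_dist_le (isDiscretelyGeodesic_wordDist hS)
    hγ (x := g i) (y := a * g i) (D := D) ⟨1, (C i).one_mem, mul_one _⟩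
    (mem_conjSub_iff.1 (ha i)) ?_ ?_ (by simp) (by norm_cast; lia)⟩
  · rw [hγ0, dist_comm]
    exact (wordDist_one_left S _).trans_le (hD' i)
  · rw [hγn, dist_comm]
    change wordDist S _ _ ≤ _
    simpa [wordDist] using hD i

theorem heightAtMost_of_isQuasiconvexFor [Finite ι] (hSfin : S.Finite)
    (hS : Subgroup.closure S = ⊤) {H : ι → Subgroup G} {R : ℝ}
    (hH : ∀ i, IsQuasiconvexFor (wordDist S) 7 0 R (H i : Set G)) :
    HeightAtMost H (Nat.card ι * {w : G | (wordLength S w : ℝ) ≤ R}.ncard) := by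
  intro k σ g hdist hk
  obtain ⟨D, hD⟩ := Finite.exists_le fun i => wordLength S (g i)
  refine (finite_setOf_wordLength_le hSfin hS (4 * D : ℕ)).subset fun a ha => ?_
  by_contra hlong
  have haD : ((4 * D : ℕ) : ℝ) < wordLength S a := lt_of_not_ge hlong
  obtain ⟨p, hp⟩ := exists_forall_coset_near hS (fun i => hH (σ i)) hD (Set.mem_iInter.1 ha)
    (Nat.cast_lt.1 haD).le
  have hcard := card_le_of_forall_smul_inter_nonempty
    ((finite_setOf_wordLength_le hSfin hS R).smul_set (a := p))
    (fun i j => not_imp_not.1 (hdist i j)) fun i => by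
      obtain ⟨z, hz, hpz⟩ := hp i
      exact ⟨z, hz, Set.mem_smul_set_iff_inv_smul_mem.2 hpz⟩
  rw [Set.ncard_smul_set, Nat.card_fin] at hcard
  lia

theorem finite_height_of_stable_general [Finite ι] (hSfin : S.Finite)
    (hS : Subgroup.closure S = ⊤) {H : ι → Subgroup G}
    (hH : ∀ i, IsStronglyQuasiconvex (wordDist S) (H i : Set G)) :
    ∃ n : ℕ, HeightAtMost H n := by
  choose R hR using fun i => hH i 7 0 (by norm_num) le_rfl
  obtain ⟨R', hR'⟩ := Finite.exists_le R
  exact ⟨_, heightAtMost_of_isQuasiconvexFor hSfin hS fun i => (hR i).mono (hR' i)⟩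

end Height

/-- **Finite height.** A finite collection of stable subgroups of a finitely generated
group has finite height: there is `n` such that the intersection of any `n + 1`
essentially distinct conjugates is finite. -/
theorem finite_height_of_stable {G : Type*} [Group G] (S : Set G) (hSfin : S.Finite)
    (hSgen : Subgroup.closure S = ⊤) (l : ℕ) (H : Fin l → Subgroup G)
    (hstable : ∀ i, IsStableSubgroup S (H i)) :
    ∃ n : ℕ, ∀ (k : ℕ) (σ : Fin k → Fin l) (g : Fin k → G),
      (∀ i j : Fin k, i ≠ j → g i • (H (σ i) : Set G) ≠ g j • (H (σ j) : Set G)) →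
      n + 1 ≤ k →
      (⋂ i : Fin k, (conjSub (g i) (H (σ i)) : Set G)).Finite :=
  finite_height_of_stable_general hSfin hSgen fun i => (hstable i).isStronglyQuasiconvex
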